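/- Let γ : [0,1] → ℝ^{2n+1} be continuous, with components (γ^{x_1}, γ^{y_1}, …, γ^{x_n}, γ^{y_n}, γ^t), and let α ∈ (1/2, 1]. Extend γ to ℝ by setting it constant on (−∞,0] and on [1,∞), and let γ_ε = γ * η_ε denote the ε-mollification. Then γ is α-Hölder as a curve into ℍ^n (i.e. d_K(γ(s), γ(s')) ≤ C·|s − s'|^α for some C and all s, s' ∈ [0,1]) if and only if both: (i) the curve of the first 2n components π∘γ : [0,1] → ℝ^{2n} is α-Hölder with respect to Euclidean metrics, and (ii) for all 0 ≤ a < b ≤ 1 the limit L(a,b) = lim_{ε→0+} ∫_a^b ∑_{j=1}^n ( γ_ε^{x_j}(s)·(γ_ε^{y_j})'(s) − γ_ε^{y_j}(s)·(γ_ε^{x_j})'(s) ) ds exists and γ^t(b) − γ^t(a) = −2·L(a,b). Moreover, in that case there is a constant C(n,α), depending only on n and α, such that d_K(γ(b), γ(a)) ≤ C(n,α)·|b−a|^α·[π∘γ]_α for all 0 ≤ a < b ≤ 1. -/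

import Mathlib

open Metric Set MeasureTheory Topology

/-- The index of the coordinate `x_j` in `ℝ^{2n+1}`. -/
def xI (n : ℕ) (j : Fin n) : Fin (2*n+1) := ⟨2*j.1, by have := j.2; omega⟩

/-- The index of the coordinate `y_j` in `ℝ^{2n+1}`. -/
def yI (n : ℕ) (j : Fin n) : Fin (2*n+1) := ⟨2*j.1+1, by have := j.2; omega⟩

/-- The index of the coordinate `t` in `ℝ^{2n+1}`. -/
def tI (n : ℕ) : Fin (2*n+1) := Fin.last (2*n)

/-- The Korányi metric on the Heisenberg group `ℍ^n = ℝ^{2n+1}`: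
`d_K(p,q) = (|z-z'|^4 + |t - t' + 2 ∑_j (x_j' y_j - x_j y_j')|^2)^{1/4}`. -/
noncomputable def dK (n : ℕ) (p q : EuclideanSpace ℝ (Fin (2*n+1))) : ℝ :=
  ((∑ i : Fin (2*n), (p (Fin.castSucc i) - q (Fin.castSucc i)) ^ 2) ^ 2 +
    (p (tI n) - q (tI n) +
      2 * ∑ j : Fin n, (q (xI n j) * p (yI n j) - p (xI n j) * q (yI n j))) ^ 2) ^ ((1:ℝ)/4)

/-- The Euclidean distance between the projections of `p, q ∈ ℝ^{2n+1}` onto the first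
`2n` coordinates. -/
noncomputable def edistProj (n : ℕ) (p q : EuclideanSpace ℝ (Fin (2*n+1))) : ℝ :=
  Real.sqrt (∑ i : Fin (2*n), (p (Fin.castSucc i) - q (Fin.castSucc i)) ^ 2)

/-- The `ε`-mollification `γ_ε = γ * η_ε` of a curve `γ : ℝ → ℝ^{2n+1}`. -/
noncomputable def mollify1 (n : ℕ) (η : ℝ → ℝ) (ε : ℝ)
    (c : ℝ → EuclideanSpace ℝ (Fin (2*n+1))) (s : ℝ) : EuclideanSpace ℝ (Fin (2*n+1)) :=
  ∫ u : ℝ, (ε⁻¹ * η (u / ε)) • c (s - u)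

/-- Sewing estimate along a filter: a family of functions of subintervals of `[0, 1]` that is
subadditive under bisection up to `D * (b - a) ^ p` and, up to an asymptotically vanishing error,
bounded by some `K * (b - a) ^ q`, where `1 < p` and `1 < q`, is asymptotically bounded by
`D / (1 - 2 ^ (1 - p)) * (b - a) ^ p`, independently of `K`. -/
lemma eventually_le_of_bisection {ι : Type*} {l : Filter ι} {φ : ι → ℝ → ℝ → ℝ} {p q D K : ℝ}
    (hp : 1 < p) (hq : 1 < q)
    (hsub : ∀ᶠ i in l, ∀ a b : ℝ, 0 ≤ a → a ≤ b → b ≤ 1 →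
      φ i a b ≤ φ i a ((a + b) / 2) + φ i ((a + b) / 2) b + D * (b - a) ^ p)
    (hsmall : ∀ a b : ℝ, 0 ≤ a → a ≤ b → b ≤ 1 → ∀ δ > 0,
      ∀ᶠ i in l, φ i a b ≤ K * (b - a) ^ q + δ)
    (a b : ℝ) (ha : 0 ≤ a) (hab : a ≤ b) (hb : b ≤ 1) (δ : ℝ) (hδ : 0 < δ) :
    ∀ᶠ i in l, φ i a b ≤ D / (1 - 2 ^ (1 - p)) * (b - a) ^ p + δ := by
  have half : ∀ h r : ℝ, 0 ≤ h → 2 * (h / 2) ^ r = 2 ^ (1 - r) * h ^ r := by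
    intro h r hh
    rw [Real.div_rpow hh (by norm_num), Real.rpow_sub (by norm_num), Real.rpow_one]
    ring
  have ratio : ∀ r : ℝ, 1 < r → (2 : ℝ) ^ (1 - r) < 1 := fun r hr =>
    Real.rpow_lt_one_of_one_lt_of_neg (by norm_num) (by linarith)
  have key : ∀ N : ℕ, ∀ a b : ℝ, 0 ≤ a → a ≤ b → b ≤ 1 → ∀ δ > 0, ∀ᶠ i in l,
      φ i a b ≤ D / (1 - 2 ^ (1 - p)) * (b - a) ^ p
        + K * ((2 : ℝ) ^ (1 - q)) ^ N * (b - a) ^ q - D / (1 - 2 ^ (1 - p)) *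
          ((2 : ℝ) ^ (1 - p)) ^ N * (b - a) ^ p + δ := by
    intro N
    induction N with
    | zero =>
      intro a b ha hab hb δ hδ
      filter_upwards [hsmall a b ha hab hb δ hδ] with i hi
      simp only [pow_zero, mul_one]
      linarith
    | succ N ih =>
      intro a b ha hab hb δ hδ
      filter_upwards [hsub, ih a ((a + b) / 2) ha (by linarith) (by linarith) (δ / 2) (by linarith),
        ih ((a + b) / 2) b (by linarith) (by linarith) hb (δ / 2) (by linarith)] with i h₀ h₁ h₂
      have h₀ := h₀ a b ha hab hb
      rw [show (a + b) / 2 - a = (b - a) / 2 by ring] at h₁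
      rw [show b - (a + b) / 2 = (b - a) / 2 by ring] at h₂
      have hP := half (b - a) p (by linarith)
      have hQ := half (b - a) q (by linarith)
      have hC : D / (1 - (2 : ℝ) ^ (1 - p)) * (1 - 2 ^ (1 - p)) = D :=
        div_mul_cancel₀ _ (by linarith [ratio p hp])
      generalize D / (1 - (2 : ℝ) ^ (1 - p)) = E at *
      refine h₀.trans ((add_le_add_left (add_le_add h₁ h₂) _).trans (le_of_eq ?_))
      rw [← hC, pow_succ, pow_succ]
      linear_combination (E - E * ((2 : ℝ) ^ (1 - p)) ^ N) * hP + K * ((2 : ℝ) ^ (1 - q)) ^ N * hQ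
  have lim : Filter.Tendsto (fun N : ℕ => K * ((2 : ℝ) ^ (1 - q)) ^ N * (b - a) ^ q
      - D / (1 - 2 ^ (1 - p)) * ((2 : ℝ) ^ (1 - p)) ^ N * (b - a) ^ p) Filter.atTop (𝓝 0) := by
    have h₁ := tendsto_pow_atTop_nhds_zero_of_lt_one (by positivity) (ratio q hq)
    have h₂ := tendsto_pow_atTop_nhds_zero_of_lt_one (by positivity) (ratio p hp)
    simpa using ((h₁.const_mul K).mul_const ((b - a) ^ q)).sub
      ((h₂.const_mul (D / (1 - 2 ^ (1 - p)))).mul_const ((b - a) ^ p))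
  obtain ⟨N, hN⟩ := (lim.eventually (gt_mem_nhds (half_pos hδ))).exists
  filter_upwards [key N a b ha hab hb (δ / 2) (by linarith)] with i hi
  linarith

/-- The symplectic form `∑_j (x_j y_j' - x_j' y_j)` of the horizontal parts of two points. -/
noncomputable def sympl (n : ℕ) (p q : EuclideanSpace ℝ (Fin (2*n+1))) : ℝ :=
  ∑ j : Fin n, (p (xI n j) * q (yI n j) - q (xI n j) * p (yI n j))

/-- The vertical component `t - t' + 2 ∑_j (x_j' y_j - x_j y_j')` entering the Korányi metric. -/
noncomputable def vert (n : ℕ) (p q : EuclideanSpace ℝ (Fin (2*n+1))) : ℝ :=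
  p (tI n) - q (tI n) + 2 * sympl n q p

/-- The horizontal coordinates of `c` are `α`-Hölder on `ℝ` with constant `M`. -/
def HorizontalHolder (n : ℕ) (α M : ℝ) (c : ℝ → EuclideanSpace ℝ (Fin (2*n+1))) : Prop :=
  ∀ (i : Fin (2*n)) (s t : ℝ), |c s i.castSucc - c t i.castSucc| ≤ M * |s - t| ^ α

lemma xI_eq_castSucc (n : ℕ) (j : Fin n) : ∃ i : Fin (2*n), xI n j = i.castSucc :=
  ⟨⟨2 * j.1, by omega⟩, rfl⟩

lemma yI_eq_castSucc (n : ℕ) (j : Fin n) : ∃ i : Fin (2*n), yI n j = i.castSucc :=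
  ⟨⟨2 * j.1 + 1, by omega⟩, rfl⟩

section Koranyi

variable {n : ℕ} (p q : EuclideanSpace ℝ (Fin (2*n+1)))

lemma edistProj_nonneg : 0 ≤ edistProj n p q := Real.sqrt_nonneg _

lemma abs_sub_le_edistProj (i : Fin (2*n)) :
    |p i.castSucc - q i.castSucc| ≤ edistProj n p q := by
  refine Real.abs_le_sqrt ?_
  exact Finset.single_le_sum (f := fun i : Fin (2*n) => (p i.castSucc - q i.castSucc) ^ 2)
    (fun _ _ => sq_nonneg _) (Finset.mem_univ i)

lemma dK_nonneg : 0 ≤ dK n p q := by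
  unfold dK
  positivity

lemma dK_pow_four : dK n p q ^ 4 = edistProj n p q ^ 4 + vert n p q ^ 2 := by
  have h : edistProj n p q ^ 4 = (∑ i : Fin (2*n), (p i.castSucc - q i.castSucc) ^ 2) ^ 2 := by
    rw [show edistProj n p q ^ 4 = (edistProj n p q ^ 2) ^ 2 by ring, edistProj,
      Real.sq_sqrt (Finset.sum_nonneg fun _ _ => sq_nonneg _)]
  rw [h, dK, ← Real.rpow_natCast, ← Real.rpow_mul (by positivity)]
  norm_num [vert, sympl]

lemma edistProj_le_dK : edistProj n p q ≤ dK n p q := by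
  refine le_of_pow_le_pow_left₀ (n := 4) (by norm_num) (dK_nonneg p q) ?_
  rw [dK_pow_four]
  nlinarith [sq_nonneg (vert n p q)]

lemma abs_vert_le_dK_sq : |vert n p q| ≤ dK n p q ^ 2 := by
  refine abs_le_of_sq_le_sq ?_ (pow_nonneg (dK_nonneg p q) 2)
  rw [← pow_mul, dK_pow_four]
  nlinarith [pow_nonneg (edistProj_nonneg p q) 4]

lemma vert_comm : vert n p q = -vert n q p := by
  have : sympl n q p = -sympl n p q := by
    simp only [sympl, ← Finset.sum_neg_distrib]
    exact Finset.sum_congr rfl fun _ _ => by ring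
  rw [vert, vert, this]
  ring

variable {p q}

lemma dK_le_of_edistProj_le {A B : ℝ} (hA : 0 ≤ A) (hB : 0 ≤ B) (h : edistProj n p q ≤ A)
    (hv : |vert n p q| ≤ B * A ^ 2) : dK n p q ≤ (1 + B) * A := by
  refine le_of_pow_le_pow_left₀ (n := 4) (by norm_num) (by positivity) ?_
  rw [dK_pow_four, mul_pow]
  have h₁ := pow_le_pow_left₀ (edistProj_nonneg p q) h 4
  have h₂ := sq_le_sq' (abs_le.mp hv).1 (abs_le.mp hv).2
  have h₃ : 0 ≤ ((1 + B) ^ 4 - 1 - B ^ 2) * A ^ 4 := by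
    have : (1 + B) ^ 4 - 1 - B ^ 2 = B * (4 + 5 * B + 4 * B ^ 2 + B ^ 3) := by ring
    rw [this]
    positivity
  nlinarith

end Koranyi

lemma abs_sympl_defect_le {n : ℕ} {α M : ℝ} (hα : 0 ≤ α) (hM : 0 ≤ M)
    {c : ℝ → EuclideanSpace ℝ (Fin (2*n+1))} (hc : HorizontalHolder n α M c)
    {a m b : ℝ} (ham : a ≤ m) (hmb : m ≤ b) :
    |sympl n (c a) (c b) - sympl n (c a) (c m) - sympl n (c m) (c b)|
      ≤ 2 * n * M ^ 2 * (b - a) ^ (2 * α) := by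
  have hbd : ∀ (i : Fin (2*n)) (s : ℝ), |s - m| ≤ b - a →
      |c s i.castSucc - c m i.castSucc| ≤ M * (b - a) ^ α := fun i s hs =>
    (hc i s m).trans (by gcongr)
  have ha' : |a - m| ≤ b - a := by rw [abs_le]; constructor <;> linarith
  have hb' : |b - m| ≤ b - a := by rw [abs_le]; constructor <;> linarith
  have hpow : (b - a) ^ (2 * α) = ((b - a) ^ α) ^ 2 := by
    rw [mul_comm, Real.rpow_mul (by linarith)]
    norm_num
  simp only [sympl, ← Finset.sum_sub_distrib]
  refine (Finset.abs_sum_le_sum_abs _ _).trans ((Finset.sum_le_card_nsmul _ _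
    (2 * (M * (b - a) ^ α) ^ 2) fun j _ => ?_).trans (le_of_eq ?_))
  · obtain ⟨k, hk⟩ := xI_eq_castSucc n j
    obtain ⟨k', hk'⟩ := yI_eq_castSucc n j
    rw [hk, hk']
    have e : ∀ x y x' y' x'' y'' : ℝ, x * y'' - x'' * y - (x * y' - x' * y) - (x' * y'' - x'' * y')
        = (x - x') * (y'' - y') - (x'' - x') * (y - y') := by intros; ring
    rw [e]
    refine (abs_sub _ _).trans ?_
    rw [abs_mul, abs_mul, two_mul ((M * (b - a) ^ α) ^ 2), sq (M * (b - a) ^ α)]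
    have hnn : 0 ≤ M * (b - a) ^ α := mul_nonneg hM (Real.rpow_nonneg (by linarith) _)
    exact add_le_add
      (mul_le_mul (hbd k a ha') (hbd k' b hb') (abs_nonneg _) hnn)
      (mul_le_mul (hbd k b hb') (hbd k' a ha') (abs_nonneg _) hnn)
  · rw [hpow]
    simp
    ring

/-- The constant of the sewing estimate for the symplectic area of an `α`-Hölder curve. -/
noncomputable def areaConst (n : ℕ) (α : ℝ) : ℝ := 2 * n / (1 - 2 ^ (1 - 2 * α))

lemma areaConst_nonneg (n : ℕ) {α : ℝ} (hα : 1 / 2 < α) : 0 ≤ areaConst n α := by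
  have : (2 : ℝ) ^ (1 - 2 * α) < 1 :=
    Real.rpow_lt_one_of_one_lt_of_neg (by norm_num) (by linarith)
  exact div_nonneg (by positivity) (by linarith)

/-- A function of subintervals of `[0, 1]` whose defect of additivity is a multiple of that of the
symplectic form along an `α`-Hölder curve, and which is of order `q > 1`, is bounded by the
Hölder constant alone. -/
lemma abs_le_of_sympl_defect {n : ℕ} {α M q K r : ℝ} (hα : 1 / 2 < α) (hM : 0 ≤ M) (hq : 1 < q)
    {c : ℝ → EuclideanSpace ℝ (Fin (2*n+1))} (hc : HorizontalHolder n α M c) {φ : ℝ → ℝ → ℝ}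
    (hadd : ∀ a m b : ℝ, φ a b - φ a m - φ m b
      = r * (sympl n (c a) (c b) - sympl n (c a) (c m) - sympl n (c m) (c b)))
    (hK : ∀ a b : ℝ, 0 ≤ a → a ≤ b → b ≤ 1 → |φ a b| ≤ K * (b - a) ^ q)
    {a b : ℝ} (ha : 0 ≤ a) (hab : a ≤ b) (hb : b ≤ 1) :
    |φ a b| ≤ |r| * areaConst n α * M ^ 2 * (b - a) ^ (2 * α) := by
  refine le_of_forall_pos_le_add fun δ hδ => ?_
  have := eventually_le_of_bisection (l := pure ()) (φ := fun _ a b => |φ a b|)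
    (p := 2 * α) (q := q) (D := |r| * (2 * n * M ^ 2)) (K := K) (by linarith) hq ?_ ?_
    a b ha hab hb δ hδ
  · refine (Filter.eventually_pure.mp this).trans (le_of_eq ?_)
    rw [areaConst]
    ring
  · refine Filter.eventually_pure.mpr fun a b _ hab _ => ?_
    have h₁ := hadd a ((a + b) / 2) b
    have h₂ := abs_sympl_defect_le (by linarith) hM hc (a := a) (m := (a + b) / 2) (b := b)
      (by linarith) (by linarith)
    have h₃ : |φ a b - φ a ((a + b) / 2) - φ ((a + b) / 2) b|
        ≤ |r| * (2 * n * M ^ 2) * (b - a) ^ (2 * α) := by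
      rw [h₁, abs_mul, mul_assoc]
      gcongr
    have h₄ : φ a b = (φ a b - φ a ((a + b) / 2) - φ ((a + b) / 2) b)
        + (φ a ((a + b) / 2) + φ ((a + b) / 2) b) := by ring
    calc |φ a b| ≤ |φ a b - φ a ((a + b) / 2) - φ ((a + b) / 2) b|
          + |φ a ((a + b) / 2) + φ ((a + b) / 2) b| := by
            conv_lhs => rw [h₄]
            exact abs_add_le _ _
      _ ≤ _ := by linarith [abs_add_le (φ a ((a + b) / 2)) (φ ((a + b) / 2) b)]
  · intro a b ha hab hb δ hδ
    exact Filter.eventually_pure.mpr (by linarith [hK a b ha hab hb])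

/-- The density `∑_j (x_j y_j' - y_j x_j')` along a curve. -/
noncomputable def areaForm (n : ℕ) (c : ℝ → EuclideanSpace ℝ (Fin (2*n+1))) (s : ℝ) : ℝ :=
  ∑ j : Fin n, (c s (xI n j) * deriv (fun u => c u (yI n j)) s -
    c s (yI n j) * deriv (fun u => c u (xI n j)) s)

section Smooth

variable {n : ℕ} {c : ℝ → EuclideanSpace ℝ (Fin (2*n+1))}

lemma continuous_areaForm (hsm : ∀ i, ContDiff ℝ 1 fun s => c s i) :
    Continuous (areaForm n c) := by
  have h₀ := fun i => (hsm i).continuous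
  have h₁ := fun i => (hsm i).continuous_deriv le_rfl
  exact continuous_finsetSum _ fun j _ => ((h₀ _).mul (h₁ _)).sub ((h₀ _).mul (h₁ _))

lemma integral_areaForm_sub_sympl (hsm : ∀ i, ContDiff ℝ 1 fun s => c s i) (a b : ℝ) :
    (∫ s in a..b, areaForm n c s) - sympl n (c a) (c b) = ∫ s in a..b, ∑ j : Fin n,
      ((c s (xI n j) - c a (xI n j)) * deriv (fun u => c u (yI n j)) s -
        (c s (yI n j) - c a (yI n j)) * deriv (fun u => c u (xI n j)) s) := by
  have h₀ := fun i => (hsm i).continuous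
  have h₁ := fun i => (hsm i).continuous_deriv le_rfl
  have ftc : ∀ i, ∫ s in a..b, deriv (fun u => c u i) s = c b i - c a i := fun i =>
    intervalIntegral.integral_deriv_eq_sub (fun s _ => (hsm i).differentiable one_ne_zero s)
      ((h₁ i).intervalIntegrable _ _)
  have hs : sympl n (c a) (c b) = ∫ s in a..b, ∑ j : Fin n,
      (c a (xI n j) * deriv (fun u => c u (yI n j)) s -
        c a (yI n j) * deriv (fun u => c u (xI n j)) s) := by
    rw [intervalIntegral.integral_finsetSum
      fun j _ => Continuous.intervalIntegrable (by fun_prop) _ _]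
    refine Finset.sum_congr rfl fun j _ => ?_
    rw [intervalIntegral.integral_sub (Continuous.intervalIntegrable (by fun_prop) _ _)
      (Continuous.intervalIntegrable (by fun_prop) _ _), intervalIntegral.integral_const_mul,
      intervalIntegral.integral_const_mul, ftc, ftc]
    ring
  rw [hs, ← intervalIntegral.integral_sub ((continuous_areaForm hsm).intervalIntegrable _ _)
    (Continuous.intervalIntegrable (by fun_prop) _ _)]
  congr 1
  ext s
  rw [areaForm, ← Finset.sum_sub_distrib]
  exact Finset.sum_congr rfl fun j _ => by ring

lemma exists_abs_integral_areaForm_sub_sympl_le_sq (hsm : ∀ i, ContDiff ℝ 1 fun s => c s i) :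
    ∃ K, ∀ a b : ℝ, 0 ≤ a → a ≤ b → b ≤ 1 →
      |(∫ s in a..b, areaForm n c s) - sympl n (c a) (c b)| ≤ K * (b - a) ^ (2 : ℝ) := by
  have h₁ := fun i => (hsm i).continuous_deriv le_rfl
  obtain ⟨B, hB⟩ := (isCompact_Icc (a := (0 : ℝ)) (b := 1)).exists_bound_of_continuousOn
    (f := fun s => ∑ i, |deriv (fun u => c u i) s|) (by fun_prop)
  have hder : ∀ i, ∀ s ∈ Icc (0 : ℝ) 1, |deriv (fun u => c u i) s| ≤ B := fun i s hs =>
    (Finset.single_le_sum (f := fun i => |deriv (fun u => c u i) s|) (fun _ _ => abs_nonneg _)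
      (Finset.mem_univ i)).trans ((le_abs_self _).trans (hB s hs))
  have hB₀ : 0 ≤ B := (norm_nonneg _).trans (hB 0 (by simp))
  refine ⟨n * (2 * (B * B)), fun a b ha hab hb => ?_⟩
  rw [integral_areaForm_sub_sympl hsm, ← Real.norm_eq_abs]
  have hlip : ∀ i, ∀ s ∈ Ioc a b, |c s i - c a i| ≤ B * (b - a) := by
    intro i s hs
    have := Convex.norm_image_sub_le_of_norm_deriv_le (f := fun u => c u i) (s := Icc (0 : ℝ) 1)
      (x := a) (y := s) (C := B) (fun s _ => (hsm i).differentiable one_ne_zero s)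
      (hder i) (convex_Icc 0 1) ⟨ha, by linarith⟩ ⟨by linarith [hs.1], by linarith [hs.2]⟩
    refine this.trans ?_
    rw [Real.norm_eq_abs, abs_of_pos (by linarith [hs.1])]
    exact mul_le_mul_of_nonneg_left (by linarith [hs.2]) hB₀
  refine (intervalIntegral.norm_integral_le_of_norm_le_const (C := n * (2 * (B * (b - a) * B)))
    fun s hs => ?_).trans (le_of_eq ?_)
  · rw [uIoc_of_le hab] at hs
    have hs' : s ∈ Icc (0 : ℝ) 1 := ⟨by linarith [hs.1], by linarith [hs.2]⟩
    refine (norm_sum_le _ _).trans ((Finset.sum_le_card_nsmul _ _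
      (2 * (B * (b - a) * B)) fun j _ => ?_).trans (le_of_eq (by simp)))
    refine (norm_sub_le _ _).trans ?_
    rw [norm_mul, norm_mul, two_mul (B * (b - a) * B)]
    have hnn : 0 ≤ B * (b - a) := mul_nonneg hB₀ (by linarith)
    exact add_le_add (mul_le_mul (hlip _ s hs) (hder _ s hs') (norm_nonneg _) hnn)
      (mul_le_mul (hlip _ s hs) (hder _ s hs') (norm_nonneg _) hnn)
  · rw [abs_of_nonneg (by linarith), Real.rpow_two]
    ring

lemma abs_integral_areaForm_sub_sympl_le {α M : ℝ} (hα : 1 / 2 < α) (hM : 0 ≤ M)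
    (hsm : ∀ i, ContDiff ℝ 1 fun s => c s i) (hc : HorizontalHolder n α M c)
    {a b : ℝ} (ha : 0 ≤ a) (hab : a ≤ b) (hb : b ≤ 1) :
    |(∫ s in a..b, areaForm n c s) - sympl n (c a) (c b)|
      ≤ areaConst n α * M ^ 2 * (b - a) ^ (2 * α) := by
  obtain ⟨K, hK⟩ := exists_abs_integral_areaForm_sub_sympl_le_sq hsm
  have := abs_le_of_sympl_defect (r := -1) hα hM one_lt_two hc
    (φ := fun a b => (∫ s in a..b, areaForm n c s) - sympl n (c a) (c b)) ?_ hK ha hab hb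
  · simpa using this
  · intro a m b
    have hi := fun a b => (continuous_areaForm hsm).intervalIntegrable (μ := volume) a b
    rw [← intervalIntegral.integral_add_adjacent_intervals (hi a m) (hi m b)]
    ring

end Smooth

section Mollification

variable {n : ℕ} {η : ℝ → ℝ} {ε : ℝ} {c : ℝ → EuclideanSpace ℝ (Fin (2*n+1))}

/-- The rescaled mollifier `η_ε`. -/
noncomputable def scaledKernel (η : ℝ → ℝ) (ε u : ℝ) : ℝ := ε⁻¹ * η (u / ε)

lemma contDiff_scaledKernel (hη : ContDiff ℝ (⊤ : ℕ∞) η) : ContDiff ℝ 1 (scaledKernel η ε) := by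
  have : ContDiff ℝ 1 η := hη.of_le (by exact_mod_cast le_top)
  unfold scaledKernel
  fun_prop

lemma support_scaledKernel (hε : 0 < ε) (hη : Function.support η ⊆ Icc (-1 : ℝ) 1) :
    Function.support (scaledKernel η ε) ⊆ Icc (-ε) ε := by
  intro u hu
  have := hη (Function.mem_support.mpr (right_ne_zero_of_mul (Function.mem_support.mp hu)))
  rw [mem_Icc, le_div_iff₀ hε, div_le_iff₀ hε] at this
  exact ⟨by linarith, by linarith⟩

lemma hasCompactSupport_scaledKernel (hε : 0 < ε) (hη : Function.support η ⊆ Icc (-1 : ℝ) 1) :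
    HasCompactSupport (scaledKernel η ε) :=
  HasCompactSupport.of_support_subset_isCompact isCompact_Icc (support_scaledKernel hε hη)

lemma integral_scaledKernel (hε : 0 < ε) (hη : ∫ s, η s = 1) : ∫ u, scaledKernel η ε u = 1 := by
  simp only [scaledKernel]
  rw [integral_const_mul, Measure.integral_comp_div, hη, abs_of_pos hε]
  simp [hε.ne']

lemma mollify1_apply (hη₁ : ContDiff ℝ (⊤ : ℕ∞) η) (hη₂ : Function.support η ⊆ Icc (-1 : ℝ) 1)
    (hc : Continuous c) (hε : 0 < ε) (s : ℝ) (i : Fin (2*n+1)) :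
    mollify1 n η ε c s i =
      convolution (scaledKernel η ε) (fun s => c s i) (ContinuousLinearMap.lsmul ℝ ℝ) volume s := by
  have hint : Integrable fun u => scaledKernel η ε u • c (s - u) := by
    refine Continuous.integrable_of_hasCompactSupport ?_
      (hasCompactSupport_scaledKernel hε hη₂).smul_right
    have := (contDiff_scaledKernel (ε := ε) hη₁).continuous
    fun_prop
  exact ((EuclideanSpace.proj (𝕜 := ℝ) i).integral_comp_comm hint).symm

lemma contDiff_mollify1 (hη₁ : ContDiff ℝ (⊤ : ℕ∞) η) (hη₂ : Function.support η ⊆ Icc (-1 : ℝ) 1)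
    (hc : Continuous c) (hε : 0 < ε) (i : Fin (2*n+1)) :
    ContDiff ℝ 1 fun s => mollify1 n η ε c s i := by
  simp only [mollify1_apply hη₁ hη₂ hc hε]
  refine (hasCompactSupport_scaledKernel hε hη₂).contDiff_convolution_left (n := 1) _
    (contDiff_scaledKernel hη₁) (Continuous.locallyIntegrable ?_)
  fun_prop

lemma tendsto_mollify1 (hη₁ : ContDiff ℝ (⊤ : ℕ∞) η) (hη₂ : Function.support η ⊆ Icc (-1 : ℝ) 1)
    (hη₃ : ∀ s, 0 ≤ η s) (hη₄ : ∫ s, η s = 1) (hc : Continuous c) (s : ℝ) (i : Fin (2*n+1)) :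
    Filter.Tendsto (fun ε => mollify1 n η ε c s i) (𝓝[>] 0) (𝓝 (c s i)) := by
  have hci : Continuous fun s => c s i := by fun_prop
  rw [Metric.tendsto_nhds]
  intro δ hδ
  obtain ⟨ρ, hρ, hball⟩ := Metric.continuous_iff.mp hci s (δ / 2) (half_pos hδ)
  filter_upwards [Ioo_mem_nhdsGT hρ] with ε hε
  rw [mollify1_apply hη₁ hη₂ hc hε.1]
  refine (dist_convolution_le (R := ρ) (half_pos hδ).le ?_ ?_ (integral_scaledKernel hε.1 hη₄)
    hci.aestronglyMeasurable fun x hx => (hball x hx).le).trans_lt (half_lt_self hδ)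
  · intro u hu
    have := support_scaledKernel hε.1 hη₂ hu
    rw [mem_ball_zero_iff, Real.norm_eq_abs, abs_lt]
    exact ⟨by linarith [this.1, hε.2], by linarith [this.2, hε.2]⟩
  · exact fun u => mul_nonneg (inv_nonneg.mpr hε.1.le) (hη₃ _)

lemma tendsto_sympl_mollify1 (hη₁ : ContDiff ℝ (⊤ : ℕ∞) η)
    (hη₂ : Function.support η ⊆ Icc (-1 : ℝ) 1) (hη₃ : ∀ s, 0 ≤ η s) (hη₄ : ∫ s, η s = 1)
    (hc : Continuous c) (a b : ℝ) :
    Filter.Tendsto (fun ε => sympl n (mollify1 n η ε c a) (mollify1 n η ε c b)) (𝓝[>] 0)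
      (𝓝 (sympl n (c a) (c b))) := by
  have h := tendsto_mollify1 hη₁ hη₂ hη₃ hη₄ hc
  exact tendsto_finsetSum _ fun j _ => ((h a _).mul (h b _)).sub ((h b _).mul (h a _))

lemma HorizontalHolder.mollify1 {α M : ℝ} (hη₁ : ContDiff ℝ (⊤ : ℕ∞) η)
    (hη₂ : Function.support η ⊆ Icc (-1 : ℝ) 1) (hη₃ : ∀ s, 0 ≤ η s) (hη₄ : ∫ s, η s = 1)
    (hc : Continuous c) (hε : 0 < ε) (h : HorizontalHolder n α M c) :
    HorizontalHolder n α M (mollify1 n η ε c) := by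
  intro i s t
  have hcont := (contDiff_scaledKernel (ε := ε) hη₁).continuous
  have hsupp := hasCompactSupport_scaledKernel hε hη₂
  have hint : ∀ s, Integrable fun u => scaledKernel η ε u • c (s - u) i.castSucc := fun s =>
    Continuous.integrable_of_hasCompactSupport (by fun_prop) hsupp.smul_right
  rw [mollify1_apply hη₁ hη₂ hc hε, mollify1_apply hη₁ hη₂ hc hε]
  simp only [convolution, ContinuousLinearMap.lsmul_apply]
  rw [← integral_sub (hint s) (hint t), ← Real.norm_eq_abs]
  refine (norm_integral_le_of_norm_le
    ((hcont.integrable_of_hasCompactSupport hsupp).mul_const (M * |s - t| ^ α))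
    (Filter.Eventually.of_forall fun u => ?_)).trans (le_of_eq ?_)
  · have hk : 0 ≤ scaledKernel η ε u := mul_nonneg (inv_nonneg.mpr hε.le) (hη₃ _)
    rw [← smul_sub, norm_smul, Real.norm_of_nonneg hk]
    refine mul_le_mul_of_nonneg_left ((h i (s - u) (t - u)).trans (le_of_eq ?_)) hk
    rw [sub_sub_sub_cancel_right]
  · rw [integral_mul_const, integral_scaledKernel hε hη₄, one_mul]

end Mollification

section Extension

variable {n : ℕ} {α : ℝ} {c : ℝ → EuclideanSpace ℝ (Fin (2*n+1))}

lemma holderConst_nonneg {M : ℝ} (h : ∀ s ∈ Icc (0:ℝ) 1, ∀ t ∈ Icc (0:ℝ) 1,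
    edistProj n (c s) (c t) ≤ M * |s - t| ^ α) : 0 ≤ M := by
  have := (edistProj_nonneg _ _).trans (h 1 (by simp) 0 (by simp))
  simpa using this

lemma horizontalHolder_of_edistProj_le {M : ℝ} (hα : 0 ≤ α) (hext0 : ∀ s ≤ (0:ℝ), c s = c 0)
    (hext1 : ∀ s, (1:ℝ) ≤ s → c s = c 1)
    (h : ∀ s ∈ Icc (0:ℝ) 1, ∀ t ∈ Icc (0:ℝ) 1, edistProj n (c s) (c t) ≤ M * |s - t| ^ α) :
    HorizontalHolder n α M c := by
  have hproj : ∀ s, c s = c (projIcc (0:ℝ) 1 zero_le_one s) := by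
    intro s
    rcases le_total s 0 with hs | hs
    · rw [hext0 s hs, projIcc_of_le_left _ hs]
    rcases le_total 1 s with hs' | hs'
    · rw [hext1 s hs', projIcc_of_right_le _ hs']
    · rw [projIcc_of_mem _ ⟨hs, hs'⟩]
  intro i s t
  have hM := holderConst_nonneg h
  rw [hproj s, hproj t]
  refine (abs_sub_le_edistProj _ _ i).trans ((h _ (Subtype.mem _) _ (Subtype.mem _)).trans ?_)
  have : |(projIcc (0:ℝ) 1 zero_le_one s : ℝ) - projIcc (0:ℝ) 1 zero_le_one t| ≤ |s - t| :=
    abs_projIcc_sub_projIcc zero_le_one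
  gcongr

lemma abs_vert_le_of_dK_le {C : ℝ} {s t : ℝ} (h : dK n (c s) (c t) ≤ C * |s - t| ^ α) :
    |vert n (c s) (c t)| ≤ C ^ 2 * |s - t| ^ (2 * α) := by
  refine (abs_vert_le_dK_sq _ _).trans ((pow_le_pow_left₀ (dK_nonneg _ _) h 2).trans_eq ?_)
  rw [mul_pow, mul_comm 2 α, Real.rpow_mul (abs_nonneg _), Real.rpow_two]

lemma dK_le_of_abs_vert_le {B M : ℝ} (hB : 0 ≤ B) (hM : 0 ≤ M) {s t : ℝ}
    (h : edistProj n (c s) (c t) ≤ M * |s - t| ^ α)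
    (hv : |vert n (c s) (c t)| ≤ B * M ^ 2 * |s - t| ^ (2 * α)) :
    dK n (c s) (c t) ≤ (1 + B) * |s - t| ^ α * M := by
  refine (dK_le_of_edistProj_le (B := B) (by positivity) hB h (hv.trans_eq ?_)).trans_eq (by ring)
  rw [mul_comm 2 α, Real.rpow_mul (abs_nonneg _), Real.rpow_two]
  ring

end Extension

section Main

variable {n : ℕ} {α : ℝ} {c : ℝ → EuclideanSpace ℝ (Fin (2*n+1))}

/-- A Hölder curve in the Heisenberg group is controlled by the Hölder constant of its
projection. -/
lemma dK_le_of_holder (hα : 1 / 2 < α) (hext0 : ∀ s ≤ (0:ℝ), c s = c 0)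
    (hext1 : ∀ s, (1:ℝ) ≤ s → c s = c 1) {CH M : ℝ}
    (hH : ∀ s ∈ Icc (0:ℝ) 1, ∀ t ∈ Icc (0:ℝ) 1, dK n (c s) (c t) ≤ CH * |s - t| ^ α)
    (hM : ∀ s ∈ Icc (0:ℝ) 1, ∀ t ∈ Icc (0:ℝ) 1, edistProj n (c s) (c t) ≤ M * |s - t| ^ α)
    {a b : ℝ} (ha : 0 ≤ a) (hab : a < b) (hb : b ≤ 1) :
    dK n (c b) (c a) ≤ (1 + 2 * areaConst n α) * |b - a| ^ α * M := by
  have hM₀ := holderConst_nonneg hM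
  have hB := areaConst_nonneg n hα
  refine dK_le_of_abs_vert_le (by positivity) hM₀
    (hM b ⟨by linarith, hb⟩ a ⟨ha, by linarith⟩) ?_
  have := abs_le_of_sympl_defect (r := 2) (φ := fun a b => vert n (c b) (c a)) (q := 2 * α)
    (K := CH ^ 2) hα hM₀ (by linarith)
    (horizontalHolder_of_edistProj_le (by linarith) hext0 hext1 hM) ?_ ?_ ha hab.le hb
  · simpa [abs_of_pos (sub_pos.mpr hab)] using this
  · intro a m b
    simp only [vert]
    ring
  · intro a b ha hab hb
    have := abs_vert_le_of_dK_le (hH b ⟨by linarith, hb⟩ a ⟨ha, by linarith⟩)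
    rwa [abs_of_nonneg (sub_nonneg.mpr hab)] at this

variable {η : ℝ → ℝ}

/-- Along a Hölder curve in the Heisenberg group, the mollified symplectic areas converge to
`-1/2` times the height change. -/
lemma tendsto_integral_areaForm_mollify1 (hα : 1 / 2 < α) (hη₁ : ContDiff ℝ (⊤ : ℕ∞) η)
    (hη₂ : Function.support η ⊆ Icc (-1 : ℝ) 1) (hη₃ : ∀ s, 0 ≤ η s) (hη₄ : ∫ s, η s = 1)
    (hc : Continuous c) {CH M : ℝ} (hM₀ : 0 ≤ M) (hM : HorizontalHolder n α M c)
    (hH : ∀ s ∈ Icc (0:ℝ) 1, ∀ t ∈ Icc (0:ℝ) 1, dK n (c s) (c t) ≤ CH * |s - t| ^ α)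
    {a b : ℝ} (ha : 0 ≤ a) (hab : a ≤ b) (hb : b ≤ 1) :
    Filter.Tendsto (fun ε => ∫ s in a..b, areaForm n (mollify1 n η ε c) s) (𝓝[>] 0)
      (𝓝 (-(c b (tI n) - c a (tI n)) / 2)) := by
  have key := eventually_le_of_bisection (l := 𝓝[>] (0 : ℝ))
    (φ := fun ε a b => |c b (tI n) - c a (tI n)
      + 2 * ∫ s in a..b, areaForm n (mollify1 n η ε c) s|)
    (p := 2 * α) (q := 2 * α) (D := 0) (K := CH ^ 2 + 2 * (areaConst n α * M ^ 2))
    (by linarith) (by linarith) ?_ ?_ a b ha hab hb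
  · rw [Metric.tendsto_nhds]
    intro δ hδ
    filter_upwards [key δ hδ] with ε h
    rw [zero_div, zero_mul, zero_add] at h
    rw [Real.dist_eq]
    rw [abs_le] at h
    rw [abs_lt]
    constructor <;> linarith [h.1, h.2]
  · filter_upwards [self_mem_nhdsWithin] with ε hε a b _ _ _
    have hi := fun a b => (continuous_areaForm (contDiff_mollify1 hη₁ hη₂ hc hε)).intervalIntegrable
      (μ := volume) a b
    rw [← intervalIntegral.integral_add_adjacent_intervals (hi a ((a + b) / 2))
      (hi ((a + b) / 2) b), zero_mul, add_zero]
    refine le_trans (le_of_eq (congrArg _ ?_)) (abs_add_le _ _)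
    ring
  · intro a b ha hab hb δ hδ
    have hv := abs_vert_le_of_dK_le (hH b ⟨by linarith, hb⟩ a ⟨ha, by linarith⟩)
    rw [abs_of_nonneg (sub_nonneg.mpr hab), vert] at hv
    filter_upwards [self_mem_nhdsWithin, Metric.tendsto_nhds.mp
      (tendsto_sympl_mollify1 hη₁ hη₂ hη₃ hη₄ hc a b) (δ / 2) (half_pos hδ)] with ε hε hs
    have hy := abs_integral_areaForm_sub_sympl_le hα hM₀ (contDiff_mollify1 hη₁ hη₂ hc hε)
      (hM.mollify1 hη₁ hη₂ hη₃ hη₄ hc hε) ha hab hb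
    rw [Real.dist_eq] at hs
    have hs := abs_lt.mp hs
    have hy := abs_le.mp hy
    have hv := abs_le.mp hv
    rw [abs_le]
    constructor <;> linarith [hs.1, hs.2, hy.1, hy.2, hv.1, hv.2]

lemma abs_vert_le_of_tendsto (hα : 1 / 2 < α) (hη₁ : ContDiff ℝ (⊤ : ℕ∞) η)
    (hη₂ : Function.support η ⊆ Icc (-1 : ℝ) 1) (hη₃ : ∀ s, 0 ≤ η s) (hη₄ : ∫ s, η s = 1)
    (hc : Continuous c) {M : ℝ} (hM₀ : 0 ≤ M) (hM : HorizontalHolder n α M c)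
    {a b L : ℝ} (ha : 0 ≤ a) (hab : a ≤ b) (hb : b ≤ 1)
    (hL : Filter.Tendsto (fun ε => ∫ s in a..b, areaForm n (mollify1 n η ε c) s) (𝓝[>] 0) (𝓝 L))
    (ht : c b (tI n) - c a (tI n) = -2 * L) :
    |vert n (c b) (c a)| ≤ 2 * areaConst n α * M ^ 2 * |b - a| ^ (2 * α) := by
  have h := le_of_tendsto (hL.sub (tendsto_sympl_mollify1 hη₁ hη₂ hη₃ hη₄ hc a b)).abs
    (Filter.eventually_of_mem self_mem_nhdsWithin fun ε hε =>
      abs_integral_areaForm_sub_sympl_le hα hM₀ (contDiff_mollify1 hη₁ hη₂ hc hε)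
        (hM.mollify1 hη₁ hη₂ hη₃ hη₄ hc hε) ha hab hb)
  rw [vert, ht, abs_of_nonneg (sub_nonneg.mpr hab),
    show -2 * L + 2 * sympl n (c a) (c b) = -2 * (L - sympl n (c a) (c b)) by ring, abs_mul]
  norm_num
  linarith

end Main

/-- Theorem 8.5 of the paper. A continuous curve
`γ : [0,1] → ℝ^{2n+1}` (extended constantly to `ℝ`) is `α`-Hölder into `ℍ^n`,
`1/2 < α ≤ 1`, iff its projection to the first `2n` coordinates is `α`-Hölder and the
height change satisfies `γ^t(b) - γ^t(a) = -2 lim_{ε→0} ∫_a^b ∑_j (γ_ε^{x_j} (γ_ε^{y_j})' -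
γ_ε^{y_j} (γ_ε^{x_j})')`.  Moreover, in that case
`d_K(γ(b),γ(a)) ≤ C(n,α) |b-a|^α [π∘γ]_α`. -/
theorem stmt12 (n : ℕ) (hn : 1 ≤ n) (α : ℝ) (hα : 1/2 < α) (hα1 : α ≤ 1)
    (η : ℝ → ℝ) (hη₁ : ContDiff ℝ (⊤ : ℕ∞) η) (hη₂ : Function.support η ⊆ Icc (-1 : ℝ) 1)
    (hη₃ : ∀ s, 0 ≤ η s) (hη₄ : ∫ s, η s = 1)
    (c : ℝ → EuclideanSpace ℝ (Fin (2*n+1))) (hc : Continuous c)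
    (hext0 : ∀ s ≤ (0:ℝ), c s = c 0) (hext1 : ∀ s, (1:ℝ) ≤ s → c s = c 1) :
    ((∃ C : ℝ, ∀ s ∈ Icc (0:ℝ) 1, ∀ t ∈ Icc (0:ℝ) 1, dK n (c s) (c t) ≤ C * |s - t| ^ α)
      ↔
      ((∃ C : ℝ, ∀ s ∈ Icc (0:ℝ) 1, ∀ t ∈ Icc (0:ℝ) 1,
          edistProj n (c s) (c t) ≤ C * |s - t| ^ α) ∧
       (∀ a b : ℝ, 0 ≤ a → a < b → b ≤ 1 → ∃ L : ℝ,
          Filter.Tendsto (fun ε : ℝ => ∫ s in a..b, ∑ j : Fin n,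
              (mollify1 n η ε c s (xI n j) * deriv (fun u => mollify1 n η ε c u (yI n j)) s -
               mollify1 n η ε c s (yI n j) * deriv (fun u => mollify1 n η ε c u (xI n j)) s))
            (nhdsWithin 0 (Set.Ioi 0)) (nhds L) ∧
          c b (tI n) - c a (tI n) = -2 * L)))
    ∧
    (∃ C : ℝ, ∀ c' : ℝ → EuclideanSpace ℝ (Fin (2*n+1)),
      Continuous c' → (∀ s ≤ (0:ℝ), c' s = c' 0) → (∀ s, (1:ℝ) ≤ s → c' s = c' 1) →
      (∃ CH : ℝ, ∀ s ∈ Icc (0:ℝ) 1, ∀ t ∈ Icc (0:ℝ) 1,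
          dK n (c' s) (c' t) ≤ CH * |s - t| ^ α) →
      ∀ M : ℝ, (∀ s ∈ Icc (0:ℝ) 1, ∀ t ∈ Icc (0:ℝ) 1,
          edistProj n (c' s) (c' t) ≤ M * |s - t| ^ α) →
      ∀ a b : ℝ, 0 ≤ a → a < b → b ≤ 1 →
        dK n (c' b) (c' a) ≤ C * |b - a| ^ α * M) := by
  have hα₀ : 0 ≤ α := by linarith
  refine ⟨⟨fun ⟨CH, hH⟩ => ?_, fun ⟨⟨M, hM⟩, hL⟩ => ?_⟩, 1 + 2 * areaConst n α,
    fun c' _ hext0' hext1' ⟨CH, hH⟩ M hM a b ha hab hb =>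
      dK_le_of_holder hα hext0' hext1' hH hM ha hab hb⟩
  · have hP : ∀ s ∈ Icc (0:ℝ) 1, ∀ t ∈ Icc (0:ℝ) 1, edistProj n (c s) (c t) ≤ CH * |s - t| ^ α :=
      fun s hs t ht => (edistProj_le_dK _ _).trans (hH s hs t ht)
    refine ⟨⟨CH, hP⟩, fun a b ha hab hb => ⟨_, tendsto_integral_areaForm_mollify1 hα hη₁ hη₂ hη₃ hη₄
      hc (holderConst_nonneg hP) (horizontalHolder_of_edistProj_le hα₀ hext0 hext1 hP) hH ha
      hab.le hb, by ring⟩⟩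
  · have hM₀ := holderConst_nonneg hM
    have hB := areaConst_nonneg n hα
    have hv : ∀ a b : ℝ, 0 ≤ a → a < b → b ≤ 1 →
        |vert n (c b) (c a)| ≤ 2 * areaConst n α * M ^ 2 * |b - a| ^ (2 * α) := by
      intro a b ha hab hb
      obtain ⟨L, hlim, ht⟩ := hL a b ha hab hb
      exact abs_vert_le_of_tendsto hα hη₁ hη₂ hη₃ hη₄ hc hM₀
        (horizontalHolder_of_edistProj_le hα₀ hext0 hext1 hM) ha hab.le hb hlim ht
    refine ⟨(1 + 2 * areaConst n α) * M, fun s hs t ht => ?_⟩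
    refine (dK_le_of_abs_vert_le (B := 2 * areaConst n α) (by positivity) hM₀
      (hM s hs t ht) ?_).trans_eq (by ring)
    rcases lt_trichotomy s t with h | rfl | h
    · rw [vert_comm, abs_neg, abs_sub_comm s t]
      exact hv s t hs.1 h ht.2
    · have h0 : vert n (c s) (c s) = 0 := by linarith [vert_comm (c s) (c s)]
      rw [h0, abs_zero]
      positivity
    · exact hv t s ht.1 h hs.2
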